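/- For every n ≥ 2, the Černý automaton C_n is synchronizing and the length of its shortest reset word is exactly (n−1)²: the word (b a^{n−1})^{n−2} b of length (n−1)² is a reset word, and no word over {a, b} of length strictly less than (n−1)² is a reset word for C_n. -/

import Mathlib

/-- The two-letter alphabet of the Černý automaton. -/
inductive Letter
  | a
  | b
deriving DecidableEq

/-- The action of a letter of the Černý automaton `C_n` on the state set `ZMod n`:
`a` sends `i` to `i + 1 (mod n)`, and `b` sends `n - 1` to `0` and fixes every other state. -/
def step (n : ℕ) : Letter → ZMod n → ZMod n
  | Letter.a, p => p + 1
  | Letter.b, p => if p = -1 then 0 else p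

/-- The map `δ_w` induced by a word `w`, applying letters left to right. -/
def run (n : ℕ) : List Letter → ZMod n → ZMod n
  | [], p => p
  | x :: w, p => run n w (step n x p)

/-- The word `(b a^{n-1})^{n-2} b`: `n - 2` repetitions of the block consisting of one
`b` followed by `n - 1` copies of `a`, followed by one final `b`. -/
def cernyWord (n : ℕ) : List Letter :=
  (List.replicate (n - 2) (Letter.b :: List.replicate (n - 1) Letter.a)).flatten ++ [Letter.b]

theorem run_append' (n : ℕ) (u v : List Letter) (p : ZMod n) :
    run n (u ++ v) p = run n v (run n u p) := by
  induction u generalizing p with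
  | nil => rfl
  | cons x u ih => exact ih _

theorem run_as (n k : ℕ) (p : ZMod n) :
    run n (List.replicate k Letter.a) p = p + k := by
  induction k generalizing p with
  | zero => simp [run]
  | succ k ih =>
    rw [List.replicate_succ]
    show run n _ (p + 1) = _
    rw [ih]; push_cast; ring

theorem run_block (n : ℕ) (hn : 2 ≤ n) (p : ZMod n) :
    run n (Letter.b :: List.replicate (n - 1) Letter.a) p = if p = -1 then -1 else p - 1 := by
  show run n _ (if p = -1 then 0 else p) = _
  rw [run_as, Nat.cast_sub (by omega)]
  split_ifs <;> simp [sub_eq_add_neg]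

theorem run_blocks_neg (n : ℕ) (hn : 2 ≤ n) (k : ℕ) :
    run n (List.replicate k (Letter.b :: List.replicate (n - 1) Letter.a)).flatten (-1) = -1 := by
  induction k with
  | zero => rfl
  | succ k ih =>
    rw [List.replicate_succ, List.flatten_cons, run_append', run_block n hn, if_pos rfl, ih]

theorem run_blocks (n : ℕ) (hn : 2 ≤ n) (k v : ℕ) (hv : v ≤ k) :
    run n (List.replicate k (Letter.b :: List.replicate (n - 1) Letter.a)).flatten (v : ZMod n) = -1
    ∨ run n (List.replicate k (Letter.b :: List.replicate (n - 1) Letter.a)).flatten (v : ZMod n)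
      = 0 := by
  induction k generalizing v with
  | zero =>
    right
    obtain rfl : v = 0 := by omega
    simp [run]
  | succ k ih =>
    rw [List.replicate_succ, List.flatten_cons, run_append', run_block n hn]
    split_ifs with h
    · left; exact run_blocks_neg n hn k
    · cases v with
      | zero =>
        left
        simpa using run_blocks_neg n hn k
      | succ m =>
        have := ih m (by omega)
        simpa using this

theorem lift_run (n : ℕ) (hn : 2 ≤ n) (w : List Letter) (x : ℕ) :
    ∃ A e B : ℕ, A + B = w.length ∧ A = w.count Letter.a ∧ e ≤ B ∧
      run n w (x : ZMod n) = ((x + A + e : ℕ) : ZMod n) ∧ e + x / n ≤ (x + A + e) / n := by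
  induction w generalizing x with
  | nil => exact ⟨0, 0, 0, by simp [run]⟩
  | cons c w ih =>
    cases c with
    | a =>
      obtain ⟨A, e, B, h1, h2, h3, h4, h5⟩ := ih (x + 1)
      refine ⟨A + 1, e, B, by simp; omega, by simp [h2], h3, ?_, ?_⟩
      · show run n w ((x : ZMod n) + 1) = _
        rw [show x + (A + 1) + e = x + 1 + A + e by ring, ← h4]; push_cast; rfl
      · have : x / n ≤ (x + 1) / n := Nat.div_le_div_right (by omega)
        rw [show x + (A + 1) + e = x + 1 + A + e by ring]; omega
    | b =>
      by_cases hx : (x : ZMod n) = -1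
      · obtain ⟨A, e, B, h1, h2, h3, h4, h5⟩ := ih (x + 1)
        have h0 : ((x + 1 : ℕ) : ZMod n) = 0 := by push_cast; rw [hx]; ring
        refine ⟨A, e + 1, B + 1, by simp; omega, by simp [h2], by omega, ?_, ?_⟩
        · show run n w (if (x : ZMod n) = -1 then 0 else x) = _
          rw [if_pos hx, ← h0, h4]; congr 1; ring
        · have hd : n ∣ x + 1 := (ZMod.natCast_eq_zero_iff _ _).1 h0
          have := Nat.succ_div_of_dvd hd
          rw [show x + A + (e + 1) = x + 1 + A + e by ring]; omega
      · obtain ⟨A, e, B, h1, h2, h3, h4, h5⟩ := ih x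
        refine ⟨A, e, B + 1, by simp; omega, by simp [h2], by omega, ?_, h5⟩
        show run n w (if (x : ZMod n) = -1 then 0 else x) = _
        rw [if_neg hx, h4]

/-- For every `n ≥ 2`, the Černý automaton `C_n` is synchronizing and its shortest reset
word has length exactly `(n - 1)²`: the word `(b a^{n-1})^{n-2} b` of length `(n - 1)²`
is a reset word, and no word of length strictly less than `(n - 1)²` is a reset word. -/
theorem cerny_reset_threshold (n : ℕ) (hn : 2 ≤ n) :
    (∃ c : ZMod n, ∀ p : ZMod n, run n (cernyWord n) p = c) ∧
    (cernyWord n).length = (n - 1) ^ 2 ∧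
    (∀ w : List Letter, w.length < (n - 1) ^ 2 →
      ¬ ∃ c : ZMod n, ∀ p : ZMod n, run n w p = c) := by
  haveI : NeZero n := ⟨by omega⟩
  refine ⟨⟨0, fun p => ?_⟩, ?_, ?_⟩
  · unfold cernyWord
    rw [run_append']
    have key : run n (List.replicate (n - 2)
        (Letter.b :: List.replicate (n - 1) Letter.a)).flatten p = -1 ∨
        run n (List.replicate (n - 2)
        (Letter.b :: List.replicate (n - 1) Letter.a)).flatten p = 0 := by
      by_cases hp : p = -1
      · left; rw [hp]; exact run_blocks_neg n hn _
      · have hlt := ZMod.val_lt p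
        have hne : p.val ≠ n - 1 := by
          intro h
          apply hp
          rw [← ZMod.natCast_zmod_val p, h, Nat.cast_sub (by omega)]
          simp
        have := run_blocks n hn (n - 2) p.val (by omega)
        rwa [ZMod.natCast_zmod_val] at this
    rcases key with h | h <;> rw [h] <;> simp [run, step]
  · obtain ⟨m, rfl⟩ : ∃ m, n = m + 2 := ⟨n - 2, by omega⟩
    simp [cernyWord]
    ring
  · rintro w hw ⟨c, hc⟩
    -- choose the state whose number of effective letters is `-1` modulo `n`
    set p : ZMod n := c - (w.count Letter.a : ZMod n) + 1 with hp
    obtain ⟨A, e, B, h1, h2, h3, h4, h5⟩ := lift_run n hn w p.val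
    rw [hc] at h4
    push_cast at h4
    rw [ZMod.natCast_zmod_val, h2] at h4
    have he : ((e + 1 : ℕ) : ZMod n) = 0 := by
      push_cast
      linear_combination -h4 - hp
    have hd := Nat.le_of_dvd (by omega) ((ZMod.natCast_eq_zero_iff _ _).1 he)
    have hlt := ZMod.val_lt p
    have h6 : e * n ≤ p.val + A + e :=
      (Nat.le_div_iff_mul_le (by omega)).1 (le_trans (Nat.le_add_right _ _) h5)
    obtain ⟨m, rfl⟩ : ∃ m, n = m + 1 := ⟨n - 1, by omega⟩
    simp only [Nat.add_sub_cancel] at hw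
    have h7 : m ≤ e := by omega
    have h8 : m * m ≤ e * m := Nat.mul_le_mul_right _ h7
    nlinarith
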